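/- Let (W,T) be a dual Coxeter system of finite rank and let c be a parabolic Coxeter element with ℓ_T(c) = n. Then the subgroup generated by the factors of a reduced reflection factorization of c does not depend on the factorization: for any two tuples (t1,…,tn), (t1',…,tn') ∈ T^n with c = t1⋯tn = t1'⋯tn', one has ⟨t1,…,tn⟩ = ⟨t1',…,tn'⟩. -/

import Mathlib

/-- The reflection length `ℓ_T` of `w`: the minimal length of a factorization of `w`
into reflections. -/
noncomputable def reflLength {B : Type*} {W : Type*} [Group W] {M : CoxeterMatrix B}
    (cs : CoxeterSystem M W) (w : W) : ℕ :=
  sInf {n | ∃ l : List W, (∀ t ∈ l, cs.IsReflection t) ∧ l.prod = w ∧ l.length = n}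

/-!
Read a factorization `t₁⋯tₙ` from the right as the path `1, tₙ, tₙ₋₁tₙ, …` in the Bruhat graph.
At a peak `y` of this path two consecutive factors `t₁ ≠ t₂` are both left inversions of `y`.
With `ρ = t₁t₂`, replacing `(t₁, t₂)` by `(ρᵏt₁, ρᵏt₂)` for some integer `k` changes neither the
product nor the generated subgroup, and replaces `y` by `ρᵏy`. Some `ρᵏy` is shorter than `y`:
otherwise `t₁y` and `t₂y` would both be shortest in their coset of the dihedral group `⟨t₁, t₂⟩`.
Lowering peaks terminates, so one may assume that the path is ascending. Then the strong exchange
property matches the factors, one at a time, with the letters of a word `s₁⋯sₙ` for the product: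
each factor is a conjugate of the letter it deletes by a product of remaining letters. Hence the
factors generate `⟨s₁, …, sₙ⟩`.
-/

section GroupTheory

variable {G : Type*} [Group G]

open Classical in
/-- The map `(t, ε) ↦ (a t a⁻¹, ε + [t = a])` on signed group elements. For simple reflections `a`
these maps satisfy the Coxeter relations, so they extend to an action of the Coxeter group whose
sign component is the cocycle `inversionParity`. -/
noncomputable def signedConj (a : G) : Function.End (G × ZMod 2) :=
  fun p ↦ (a * p.1 * a⁻¹, p.2 + if p.1 = a then 1 else 0)

open Classical in
theorem signedConj_smul (a : G) (p : G × ZMod 2) :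
    signedConj a • p = (a * p.1 * a⁻¹, p.2 + if p.1 = a then 1 else 0) :=
  rfl

theorem closure_setOf_mem_cons (t : G) (l : List G) :
    Subgroup.closure {s | s ∈ t :: l} = Subgroup.closure {t} ⊔ Subgroup.closure {s | s ∈ l} := by
  rw [← Subgroup.closure_union]
  congr 1
  ext s
  simp

theorem closure_setOf_mem_append_cons_cons (l l' : List G) (s t : G) :
    Subgroup.closure {r | r ∈ l ++ s :: t :: l'} =
      Subgroup.closure {r | r ∈ l ++ l'} ⊔ Subgroup.closure {s, t} := by
  rw [← Subgroup.closure_union]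
  congr 1
  ext r
  simp only [List.mem_append, List.mem_cons, Set.mem_ofPred_eq, Set.mem_union,
    Set.mem_insert_iff, Set.mem_singleton_iff]
  tauto

theorem closure_conj_singleton_sup {g : G} {K : Subgroup G} (hg : g ∈ K) (s : G) :
    Subgroup.closure {g * s * g⁻¹} ⊔ K = Subgroup.closure {s} ⊔ K := by
  have conj_le {h : G} (hh : h ∈ K) (t : G) :
      Subgroup.closure {h * t * h⁻¹} ⊔ K ≤ Subgroup.closure {t} ⊔ K := by
    refine sup_le ?_ le_sup_right
    have ht : t ∈ Subgroup.closure {t} ⊔ K :=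
      Subgroup.mem_sup_left (Subgroup.mem_closure_singleton_self t)
    have hh' : h ∈ Subgroup.closure {t} ⊔ K := Subgroup.mem_sup_right hh
    simpa using mul_mem (mul_mem hh' ht) (inv_mem hh')
  refine le_antisymm (conj_le hg s) ?_
  simpa [mul_assoc] using conj_le (inv_mem hg) (g * s * g⁻¹)

section Dihedral

variable {a b : G}

theorem semiconjBy_mul_zpow (ha : a⁻¹ = a) (hb : b⁻¹ = b) (k : ℤ) :
    SemiconjBy a ((a * b) ^ k) ((a * b) ^ (-k)) := by
  have h : SemiconjBy a (a * b) (a * b)⁻¹ := by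
    rw [SemiconjBy, mul_inv_rev, inv_mul_cancel_right, hb]
    nth_rw 1 [← ha]
    exact inv_mul_cancel_left a b
  simpa only [inv_zpow'] using h.zpow_right k

theorem zpow_mul_mul_zpow_mul (ha : a⁻¹ = a) (hb : b⁻¹ = b) (k : ℤ) :
    (a * b) ^ k * a * ((a * b) ^ k * b) = a * b := by
  rw [mul_assoc, ← mul_assoc a, (semiconjBy_mul_zpow ha hb k).eq, zpow_neg]
  group

theorem closure_zpow_mul_pair (ha : a⁻¹ = a) (hb : b⁻¹ = b) (k : ℤ) :
    Subgroup.closure {(a * b) ^ k * a, (a * b) ^ k * b} = Subgroup.closure {a, b} := by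
  have mem_left (x y : G) : x ∈ Subgroup.closure {x, y} := Subgroup.subset_closure (by simp)
  have mem_right (x y : G) : y ∈ Subgroup.closure {x, y} := Subgroup.subset_closure (by simp)
  refine le_antisymm ?_ ?_ <;> rw [Subgroup.closure_le, Set.pair_subset_iff]
  · have hρ := zpow_mem (mul_mem (mem_left a b) (mem_right a b)) k
    exact ⟨mul_mem hρ (mem_left a b), mul_mem hρ (mem_right a b)⟩
  · have hρ := zpow_mem (zpow_mul_mul_zpow_mul ha hb k ▸
      mul_mem (mem_left ((a * b) ^ k * a) ((a * b) ^ k * b)) (mem_right _ _)) k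
    exact ⟨(mul_mem_cancel_left hρ).1 (mem_left _ _), (mul_mem_cancel_left hρ).1 (mem_right _ _)⟩

variable (a b) in
/-- The reflections of the dihedral group generated by two involutions `a` and `b`: the
elements of the coset `⟨ab⟩a`. -/
def dihedralReflections : Set G :=
  Set.range fun k : ℤ ↦ (a * b) ^ k * a

variable (a b) in
theorem left_mem_dihedralReflections : a ∈ dihedralReflections a b :=
  ⟨0, by simp⟩

theorem right_mem_dihedralReflections (hb : b⁻¹ = b) : b ∈ dihedralReflections a b :=
  ⟨-1, by simp [hb]⟩

theorem zpow_mul_mem_dihedralReflections {r : G} (hr : r ∈ dihedralReflections a b) (k : ℤ) :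
    (a * b) ^ k * r ∈ dihedralReflections a b := by
  obtain ⟨j, rfl⟩ := hr
  exact ⟨k + j, by simp only [zpow_add, mul_assoc]⟩

theorem conj_mem_dihedralReflections (ha : a⁻¹ = a) (hb : b⁻¹ = b) {q r : G}
    (hq : q ∈ dihedralReflections a b) (hr : r ∈ dihedralReflections a b) :
    q * r * q⁻¹ ∈ dihedralReflections a b := by
  obtain ⟨j, rfl⟩ := hq
  obtain ⟨k, rfl⟩ := hr
  refine ⟨j + -(k + -j), ?_⟩
  calc (a * b) ^ (j + -(k + -j)) * a = (a * b) ^ j * ((a * b) ^ (-(k + -j)) * a) := by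
        rw [zpow_add, mul_assoc]
    _ = (a * b) ^ j * (a * (a * b) ^ (k + -j)) := by rw [(semiconjBy_mul_zpow ha hb _).eq]
    _ = (a * b) ^ j * a * ((a * b) ^ k * a) * ((a * b) ^ j * a)⁻¹ := by
        rw [zpow_add, zpow_neg]; group

theorem exists_eq_conj_of_mem_dihedralReflections (ha : a⁻¹ = a) (hb : b⁻¹ = b) {r : G}
    (hr : r ∈ dihedralReflections a b) : ∃ g, r = g * a * g⁻¹ ∨ r = g * b * g⁻¹ := by
  have hcomm (j : ℤ) : (a * b) ^ j * a = a * ((a * b) ^ j)⁻¹ := by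
    simpa using (semiconjBy_mul_zpow ha hb (-j)).eq.symm
  obtain ⟨k, rfl⟩ := hr
  obtain ⟨j, rfl | rfl⟩ := Int.even_or_odd' k
  · refine ⟨(a * b) ^ j, .inl ?_⟩
    dsimp only
    rw [mul_assoc _ a, ← hcomm, two_mul, zpow_add, mul_assoc]
  · refine ⟨(a * b) ^ j * a, .inr ?_⟩
    have hj : (a * b) ^ j * a * b = (a * b) ^ (j + 1) := by rw [zpow_add_one, mul_assoc]
    rw [hj, hcomm, mul_inv_rev, inv_inv, ha, ← mul_assoc, ← zpow_add, add_right_comm, two_mul]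

end Dihedral

end GroupTheory

section Inversions

variable {B W : Type*} [Group W] {M : CoxeterMatrix B} (cs : CoxeterSystem M W)

open Classical in
theorem prod_map_signedConj_smul (ω : List B) (p : W × ZMod 2) :
    (ω.map fun i ↦ signedConj (cs.simple i)).prod • p =
      (cs.wordProd ω * p.1 * (cs.wordProd ω)⁻¹, p.2 + (cs.rightInvSeq ω).count p.1) := by
  induction ω with
  | nil => simp
  | cons i ω ih =>
    have hconj : cs.wordProd ω * p.1 * (cs.wordProd ω)⁻¹ = cs.simple i ↔
        (cs.wordProd ω)⁻¹ * cs.simple i * cs.wordProd ω = p.1 := by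
      rw [mul_inv_eq_iff_eq_mul, ← eq_inv_mul_iff_mul_eq, eq_comm, mul_assoc]
    rw [List.map_cons, List.prod_cons, mul_smul, ih, signedConj_smul]
    simp only [hconj]
    simp [CoxeterSystem.rightInvSeq, CoxeterSystem.wordProd_cons, List.count_cons, mul_assoc,
      add_assoc]

theorem prod_map_reverse_alternatingWord {N : Type*} [Monoid N] (f : B → N) (i j : B) (m : ℕ) :
    ((CoxeterSystem.alternatingWord j i (2 * m)).reverse.map f).prod = (f i * f j) ^ m := by
  induction m with
  | zero => simp [CoxeterSystem.alternatingWord]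
  | succ m ih =>
    rw [mul_add, pow_succ', ← ih]
    simp [CoxeterSystem.alternatingWord_succ, mul_assoc]

open Classical in
/-- The inversion sequence of a braid relation runs twice through the same list. -/
theorem even_count_leftInvSeq_alternatingWord (i j : B) (t : W) :
    Even ((cs.leftInvSeq (CoxeterSystem.alternatingWord j i (2 * M i j))).count t) := by
  set L := cs.leftInvSeq (CoxeterSystem.alternatingWord j i (2 * M i j)) with hL
  have hlen : L.length = 2 * M i j := by simp [hL]
  have hdrop : L.drop (M i j) = L.take (M i j) := by
    refine List.ext_getElem (by simp [hlen]; omega) fun k h₁ h₂ ↦ ?_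
    have hk : k < M i j := by simp at h₂; omega
    simp only [List.getElem_drop, List.getElem_take, hL]
    rw [CoxeterSystem.getElem_leftInvSeq_alternatingWord cs j i (M i j) (M i j + k) (by omega),
      CoxeterSystem.getElem_leftInvSeq_alternatingWord cs j i (M i j) k (by omega)]
    simp only [CoxeterSystem.prod_alternatingWord_eq_mul_pow]
    have (n : ℕ) : (2 * n + 1) / 2 = n := by omega
    simp [this, pow_add, cs.simple_mul_simple_pow]
  rw [← List.take_append_drop (M i j) L, hdrop, List.count_append]
  exact Even.add_self _

theorem isLiftable_signedConj : M.IsLiftable fun i ↦ signedConj (cs.simple i) := by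
  classical
  intro i j
  refine eq_of_smul_eq_smul fun p : W × ZMod 2 ↦ ?_
  set ω := CoxeterSystem.alternatingWord j i (2 * M i j)
  have hω : cs.wordProd ω.reverse = 1 := by
    rw [CoxeterSystem.wordProd, prod_map_reverse_alternatingWord, cs.simple_mul_simple_pow]
  have hcount : ((cs.rightInvSeq ω.reverse).count p.1 : ZMod 2) = 0 := by
    rw [cs.rightInvSeq_reverse, List.count_reverse, ZMod.natCast_eq_zero_iff_even]
    exact even_count_leftInvSeq_alternatingWord cs i j p.1
  rw [← prod_map_reverse_alternatingWord fun i ↦ signedConj (cs.simple i),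
    prod_map_signedConj_smul, hω, hcount]
  simp

/-- The parity of the number of occurrences of `t` in the left inversion sequence of any word
for `w`. -/
noncomputable def inversionParity (w t : W) : ZMod 2 :=
  (cs.lift ⟨_, isLiftable_signedConj cs⟩ w⁻¹ • (t, (0 : ZMod 2))).2

open Classical in
theorem lift_signedConj_inv_wordProd_smul (ω : List B) (p : W × ZMod 2) :
    cs.lift ⟨_, isLiftable_signedConj cs⟩ (cs.wordProd ω)⁻¹ • p =
      ((cs.wordProd ω)⁻¹ * p.1 * cs.wordProd ω, p.2 + (cs.leftInvSeq ω).count p.1) := by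
  have h := prod_map_signedConj_smul cs ω.reverse p
  rw [cs.wordProd_reverse, inv_inv, cs.rightInvSeq_reverse, List.count_reverse] at h
  rw [← h, ← cs.wordProd_reverse, CoxeterSystem.wordProd, map_list_prod, List.map_map]
  congr 3
  exact funext fun i ↦ cs.lift_apply_simple (isLiftable_signedConj cs) i

open Classical in
theorem inversionParity_wordProd (ω : List B) (t : W) :
    inversionParity cs (cs.wordProd ω) t = (cs.leftInvSeq ω).count t := by
  rw [inversionParity, lift_signedConj_inv_wordProd_smul, zero_add]

theorem inversionParity_mul (x y t : W) :
    inversionParity cs (x * y) t =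
      inversionParity cs x t + inversionParity cs y (x⁻¹ * t * x) := by
  classical
  obtain ⟨ω, rfl⟩ := cs.wordProd_surjective x
  obtain ⟨ω', rfl⟩ := cs.wordProd_surjective y
  rw [inversionParity, mul_inv_rev, map_mul, mul_smul, lift_signedConj_inv_wordProd_smul,
    lift_signedConj_inv_wordProd_smul, zero_add, inversionParity_wordProd,
    inversionParity_wordProd]

theorem inversionParity_one (t : W) : inversionParity cs 1 t = 0 := by
  classical
  simpa using inversionParity_wordProd cs [] t

theorem inversionParity_self {t : W} (ht : cs.IsReflection t) : inversionParity cs t t = 1 := by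
  classical
  obtain ⟨u, i, rfl⟩ := ht
  have hsimple : inversionParity cs (cs.simple i) (cs.simple i) = 1 := by
    simpa using inversionParity_wordProd cs [i] (cs.simple i)
  have hcancel := inversionParity_mul cs u u⁻¹ (u * cs.simple i * u⁻¹)
  have hconj : u⁻¹ * (u * cs.simple i * u⁻¹) * u = cs.simple i := by group
  rw [mul_inv_cancel, inversionParity_one, hconj] at hcancel
  rw [mul_assoc u, inversionParity_mul, inversionParity_mul, ← mul_assoc u, hconj, hsimple,
    inv_mul_cancel, one_mul, add_left_comm, ← hcancel, add_zero]

theorem mem_leftInvSeq_of_inversionParity_eq_one {ω : List B} {t : W}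
    (h : inversionParity cs (cs.wordProd ω) t = 1) : t ∈ cs.leftInvSeq ω := by
  classical
  by_contra hmem
  simp [inversionParity_wordProd, List.count_eq_zero_of_not_mem hmem] at h

theorem isLeftInversion_iff_inversionParity_eq_one {w t : W} :
    cs.IsLeftInversion w t ↔ inversionParity cs w t = 1 := by
  have isLeftInversion_of_eq_one {w : W} (h : inversionParity cs w t = 1) :
      cs.IsLeftInversion w t := by
    obtain ⟨ω, hω, rfl⟩ := cs.exists_isReduced w
    exact cs.isLeftInversion_of_mem_leftInvSeq hω (mem_leftInvSeq_of_inversionParity_eq_one cs h)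
  refine ⟨fun h ↦ ?_, isLeftInversion_of_eq_one⟩
  by_contra hne
  have hzero : inversionParity cs w t = 0 := by
    generalize inversionParity cs w t = z at hne
    revert z; decide
  refine h.1.isLeftInversion_mul_right_iff.1 (isLeftInversion_of_eq_one ?_) h
  rw [inversionParity_mul, inversionParity_self cs h.1, inv_mul_cancel, one_mul, hzero, add_zero]

/-- The strong exchange property. -/
theorem mem_leftInvSeq_of_isLeftInversion {ω : List B} {t : W}
    (h : cs.IsLeftInversion (cs.wordProd ω) t) : t ∈ cs.leftInvSeq ω :=
  mem_leftInvSeq_of_inversionParity_eq_one cs ((isLeftInversion_iff_inversionParity_eq_one cs).1 h)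

theorem isLeftInversion_mul_iff {x y t : W} :
    cs.IsLeftInversion (x * y) t ↔
      Xor (cs.IsLeftInversion x t) (cs.IsLeftInversion y (x⁻¹ * t * x)) := by
  have add_eq_one : ∀ a b : ZMod 2, a + b = 1 ↔ ¬ (a = 1 ↔ b = 1) := by decide
  simp only [isLeftInversion_iff_inversionParity_eq_one, inversionParity_mul, xor_iff_not_iff,
    add_eq_one]

theorem not_isLeftInversion_one (t : W) : ¬ cs.IsLeftInversion 1 t := by
  simp [CoxeterSystem.IsLeftInversion]

theorem isLeftInversion_self {t : W} (ht : cs.IsReflection t) : cs.IsLeftInversion t t := by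
  simpa using ht.isLeftInversion_mul_right_iff.2 (not_isLeftInversion_one cs t)

theorem eq_simple_of_isLeftInversion_simple {i : B} {t : W}
    (h : cs.IsLeftInversion (cs.simple i) t) : t = cs.simple i := by
  simpa using mem_leftInvSeq_of_isLeftInversion cs (ω := [i]) (by simpa using h)

theorem isLeftInversion_inv_conj_iff {w t : W} :
    cs.IsLeftInversion w⁻¹ (w⁻¹ * t * w) ↔ cs.IsLeftInversion w t := by
  have h := isLeftInversion_mul_iff cs (x := w) (y := w⁻¹) (t := t)
  rw [mul_inv_cancel, xor_iff_not_iff] at h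
  have := not_isLeftInversion_one cs t
  tauto

end Inversions

section ReflectionSubsystems

variable {B W : Type*} [Group W] {M : CoxeterMatrix B} (cs : CoxeterSystem M W)

/-- If `u` is shortest such that `u s u⁻¹ ∈ R` for some simple reflection `s`, then `r = u s u⁻¹`
works. -/
theorem exists_mem_forall_isLeftInversion_eq {R : Set W} (hne : R.Nonempty)
    (hR : ∀ t ∈ R, cs.IsReflection t) (hconj : ∀ q ∈ R, ∀ r ∈ R, q * r * q⁻¹ ∈ R) :
    ∃ r ∈ R, ∀ t ∈ R, cs.IsLeftInversion r t → t = r := by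
  have hconjugate : ∃ u i, u * cs.simple i * u⁻¹ ∈ R := by
    obtain ⟨r, hr⟩ := hne
    obtain ⟨u, i, rfl⟩ := hR r hr
    exact ⟨u, i, hr⟩
  obtain ⟨u, ⟨i, hu⟩, hmin⟩ := exists_minimalFor_of_wellFoundedLT _ cs.length hconjugate
  set r := u * cs.simple i * u⁻¹ with hr
  have hu_inv (t : W) (ht : t ∈ R) : ¬ cs.IsLeftInversion u t := fun h ↦ by
    have hmem : t * u * cs.simple i * (t * u)⁻¹ ∈ R := by
      simpa [hr, mul_assoc] using hconj t ht r hu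
    exact (hmin ⟨i, hmem⟩ h.2.le).not_gt h.2
  refine ⟨r, hu, fun t ht hrt ↦ ?_⟩
  rw [hr, mul_assoc, isLeftInversion_mul_iff, isLeftInversion_mul_iff] at hrt
  have hright : ¬ cs.IsLeftInversion u⁻¹ ((cs.simple i)⁻¹ * (u⁻¹ * t * u) * cs.simple i) := by
    have hconj' : (cs.simple i)⁻¹ * (u⁻¹ * t * u) * cs.simple i = u⁻¹ * (r * t * r⁻¹) * u := by
      simp [hr, mul_assoc]
    rw [hconj', isLeftInversion_inv_conj_iff]
    exact hu_inv _ (hconj r hu t ht)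
  have hsimple : cs.IsLeftInversion (cs.simple i) (u⁻¹ * t * u) := by
    rw [xor_iff_not_iff, xor_iff_not_iff] at hrt
    have hleft := hu_inv t ht
    tauto
  rw [hr, ← eq_simple_of_isLeftInversion_simple cs hsimple]
  group

theorem eq_one_of_forall_not_isLeftInversion {R : Set W} {g : W} (hne : R.Nonempty)
    (hR : ∀ t ∈ R, cs.IsReflection t) (hconj : ∀ q ∈ R, ∀ r ∈ R, q * r * q⁻¹ ∈ R)
    (hmul : ∀ r ∈ R, g * r ∈ R) (hg : ∀ t ∈ R, ¬ cs.IsLeftInversion g t) : g = 1 := by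
  obtain ⟨r, hr, hr_inv⟩ := exists_mem_forall_isLeftInversion_eq cs hne hR hconj
  have hrg : r * g ∈ R := by simpa [mul_assoc] using hconj r hr _ (hmul r hr)
  have hself : cs.IsLeftInversion (g * r) (g * r) := isLeftInversion_self cs (hR _ (hmul r hr))
  have hrg_inv : cs.IsLeftInversion r (r * g) := by
    simpa [isLeftInversion_mul_iff, hg _ (hmul r hr)] using hself
  exact mul_eq_left.1 (hr_inv _ hrg hrg_inv)

theorem isReflection_of_mem_dihedralReflections {t₁ t₂ r : W} (h₁ : cs.IsReflection t₁)
    (h₂ : cs.IsReflection t₂) (hr : r ∈ dihedralReflections t₁ t₂) : cs.IsReflection r := by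
  obtain ⟨g, rfl | rfl⟩ := exists_eq_conj_of_mem_dihedralReflections h₁.inv h₂.inv hr
  · exact h₁.conj g
  · exact h₂.conj g

/-- Otherwise `t₁ y` and `t₂ y` would both be shortest in the coset `⟨t₁, t₂⟩ y`, whose shortest
element is unique. -/
theorem exists_length_zpow_mul_lt {y t₁ t₂ : W} (hne : t₁ ≠ t₂) (h₁ : cs.IsLeftInversion y t₁)
    (h₂ : cs.IsLeftInversion y t₂) : ∃ k : ℤ, cs.length ((t₁ * t₂) ^ k * y) < cs.length y := by
  by_contra! hmin
  have ht₁ := h₁.1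
  have ht₂ := h₂.1
  have hinv₁ : ∀ t ∈ dihedralReflections t₁ t₂, ¬ cs.IsLeftInversion (t₁ * y) t := by
    rintro _ ⟨k, rfl⟩ ⟨-, hlt⟩
    have hrotate : (t₁ * t₂) ^ k * t₁ * (t₁ * y) = (t₁ * t₂) ^ k * y := by
      rw [mul_assoc, ← mul_assoc t₁, ht₁.mul_self, one_mul]
    exact ((hmin k).trans_lt (hrotate ▸ hlt)).not_gt h₁.2
  have hinv₂ : ∀ t ∈ dihedralReflections t₁ t₂, ¬ cs.IsLeftInversion (t₂ * y) t := by
    rintro _ ⟨k, rfl⟩ ⟨-, hlt⟩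
    have hrotate : (t₁ * t₂) ^ k * t₁ * (t₂ * y) = (t₁ * t₂) ^ (k + 1) * y := by
      simp only [zpow_add_one, mul_assoc]
    exact ((hmin (k + 1)).trans_lt (hrotate ▸ hlt)).not_gt h₂.2
  have hconj : ∀ q ∈ dihedralReflections t₁ t₂, ∀ r ∈ dihedralReflections t₁ t₂,
      q * r * q⁻¹ ∈ dihedralReflections t₁ t₂ :=
    fun _ hq _ hr ↦ conj_mem_dihedralReflections ht₁.inv ht₂.inv hq hr
  have hrotation : t₁ * t₂ = 1 := by
    refine eq_one_of_forall_not_isLeftInversion cs ⟨t₁, left_mem_dihedralReflections t₁ t₂⟩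
      (fun t ht ↦ isReflection_of_mem_dihedralReflections cs ht₁ ht₂ ht)
      hconj (fun r hr ↦ by simpa using zpow_mul_mem_dihedralReflections hr 1) fun t ht hρ ↦ ?_
    have hmul : t₁ * y = t₁ * t₂ * (t₂ * y) := by
      rw [mul_assoc, ← mul_assoc t₂, ht₂.mul_self, one_mul]
    have hmem : (t₁ * t₂)⁻¹ * t * (t₁ * t₂) ∈ dihedralReflections t₁ t₂ := by
      simpa [mul_assoc, ht₁.inv, ht₂.inv] using
        hconj _ (right_mem_dihedralReflections ht₂.inv) _
          (hconj _ (left_mem_dihedralReflections t₁ t₂) t ht)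
    refine hinv₁ t ht ?_
    rw [hmul, isLeftInversion_mul_iff]
    exact .inl ⟨hρ, hinv₂ _ hmem⟩
  exact hne (by rw [eq_inv_of_mul_eq_one_left hrotation, ht₂.inv])

end ReflectionSubsystems

section Factorizations

variable {B W : Type*} [Group W] {M : CoxeterMatrix B} (cs : CoxeterSystem M W)

theorem reflLength_prod_le {l : List W} (hl : ∀ t ∈ l, cs.IsReflection t) :
    reflLength cs l.prod ≤ l.length :=
  Nat.sInf_le ⟨l, hl, rfl, rfl⟩

/-- A list of reflections is ascending if the length increases along its partial products
`1, tₙ, tₙ₋₁tₙ, …, t₁⋯tₙ`, that is, if these products form a path from `1` in the Bruhat graph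
that goes up at every step. -/
def IsAscending : List W → Prop
  | [] => True
  | t :: l => cs.IsLeftInversion (t :: l).prod t ∧ IsAscending l

/-- The total length of the partial products `tₙ, tₙ₋₁tₙ, …, t₁⋯tₙ`, which decreases when a peak of
the corresponding path in the Bruhat graph is replaced by a lower vertex. -/
noncomputable def partialProdLengthSum : List W → ℕ
  | [] => 0
  | t :: l => cs.length (t :: l).prod + partialProdLengthSum l

theorem partialProdLengthSum_append_lt_append {l l' : List W} (hprod : l'.prod = l.prod)
    (hlt : partialProdLengthSum cs l' < partialProdLengthSum cs l) (a : List W) :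
    partialProdLengthSum cs (a ++ l') < partialProdLengthSum cs (a ++ l) := by
  induction a with
  | nil => exact hlt
  | cons t a ih => simpa [partialProdLengthSum, hprod] using ih

theorem exists_peak_of_not_isAscending {l : List W} (hl : ∀ t ∈ l, cs.IsReflection t)
    (h : ¬ IsAscending cs l) :
    ∃ a t₁ t₂ b, l = a ++ t₁ :: t₂ :: b ∧
      cs.IsLeftInversion (t₂ :: b).prod t₁ ∧ cs.IsLeftInversion (t₂ :: b).prod t₂ := by
  induction l with
  | nil => exact absurd trivial h
  | cons t l ih =>
    obtain ⟨ht, hl⟩ := List.forall_mem_cons.1 hl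
    by_cases hasc : IsAscending cs l
    · have hdown : cs.IsLeftInversion l.prod t := by
        rw [IsAscending, List.prod_cons, ht.isLeftInversion_mul_right_iff] at h
        tauto
      cases l with
      | nil => exact absurd hdown (not_isLeftInversion_one cs t)
      | cons t₂ b => exact ⟨[], t, t₂, b, rfl, hdown, hasc.1⟩
    · obtain ⟨a, t₁, t₂, b, rfl, hpeak⟩ := ih hl hasc
      exact ⟨t :: a, t₁, t₂, b, rfl, hpeak⟩

theorem exists_partialProdLengthSum_lt_of_peak {t₁ t₂ : W} {b : List W} (hne : t₁ ≠ t₂)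
    (h₁ : cs.IsLeftInversion (t₂ :: b).prod t₁) (h₂ : cs.IsLeftInversion (t₂ :: b).prod t₂) :
    ∃ r₁ r₂, cs.IsReflection r₁ ∧ cs.IsReflection r₂ ∧ r₁ * r₂ = t₁ * t₂ ∧
      Subgroup.closure {r₁, r₂} = Subgroup.closure {t₁, t₂} ∧
      partialProdLengthSum cs (r₁ :: r₂ :: b) < partialProdLengthSum cs (t₁ :: t₂ :: b) := by
  obtain ⟨k, hk⟩ := exists_length_zpow_mul_lt cs hne h₁ h₂
  have hinv₁ := h₁.1.inv
  have hinv₂ := h₂.1.inv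
  have hprod := zpow_mul_mul_zpow_mul hinv₁ hinv₂ k
  have isReflection_zpow_mul {r : W} (hr : r ∈ dihedralReflections t₁ t₂) :
      cs.IsReflection ((t₁ * t₂) ^ k * r) :=
    isReflection_of_mem_dihedralReflections cs h₁.1 h₂.1 (zpow_mul_mem_dihedralReflections hr k)
  refine ⟨_, _, isReflection_zpow_mul (left_mem_dihedralReflections t₁ t₂),
    isReflection_zpow_mul (right_mem_dihedralReflections hinv₂), hprod,
    closure_zpow_mul_pair hinv₁ hinv₂ k, ?_⟩
  simp only [partialProdLengthSum, List.prod_cons, ← mul_assoc] at hk hprod ⊢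
  rw [hprod]
  omega

theorem exists_partialProdLengthSum_lt_of_not_isAscending {l : List W}
    (hl : ∀ t ∈ l, cs.IsReflection t) (hred : reflLength cs l.prod = l.length)
    (hasc : ¬ IsAscending cs l) :
    ∃ l' : List W, (∀ t ∈ l', cs.IsReflection t) ∧ l'.prod = l.prod ∧ l'.length = l.length ∧
      Subgroup.closure {t | t ∈ l'} = Subgroup.closure {t | t ∈ l} ∧
      partialProdLengthSum cs l' < partialProdLengthSum cs l := by
  obtain ⟨a, t₁, t₂, b, rfl, h₁, h₂⟩ := exists_peak_of_not_isAscending cs hl hasc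
  have ha : ∀ t ∈ a, cs.IsReflection t := fun t ht ↦ hl t (by simp [ht])
  have hb : ∀ t ∈ b, cs.IsReflection t := fun t ht ↦ hl t (by simp [ht])
  have hne : t₁ ≠ t₂ := by
    rintro rfl
    have hle := reflLength_prod_le cs (List.forall_mem_append.2 ⟨ha, hb⟩)
    have hcancel : (a ++ t₁ :: t₁ :: b).prod = (a ++ b).prod := by
      simp [← mul_assoc t₁ t₁, h₁.1.mul_self]
    rw [← hcancel, hred] at hle
    simp at hle
  obtain ⟨r₁, r₂, hr₁, hr₂, hmul, hcl, hlt⟩ :=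
    exists_partialProdLengthSum_lt_of_peak cs hne h₁ h₂
  have hprod : (r₁ :: r₂ :: b).prod = (t₁ :: t₂ :: b).prod := by
    simp [← mul_assoc, hmul]
  refine ⟨a ++ r₁ :: r₂ :: b, ?_, by simp only [List.prod_append, hprod], by simp, ?_,
    partialProdLengthSum_append_lt_append cs hprod hlt a⟩
  · simpa [or_imp, forall_and, hr₁, hr₂] using ⟨ha, hb⟩
  · rw [closure_setOf_mem_append_cons_cons, closure_setOf_mem_append_cons_cons, hcl]

theorem exists_isAscending_factorization {l : List W} (hl : ∀ t ∈ l, cs.IsReflection t)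
    (hred : reflLength cs l.prod = l.length) :
    ∃ l' : List W, IsAscending cs l' ∧ l'.prod = l.prod ∧ l'.length = l.length ∧
      Subgroup.closure {t | t ∈ l'} = Subgroup.closure {t | t ∈ l} := by
  induction hN : partialProdLengthSum cs l using Nat.strong_induction_on generalizing l with
  | _ N ih =>
  subst hN
  by_cases hasc : IsAscending cs l
  · exact ⟨l, hasc, rfl, rfl, rfl⟩
  obtain ⟨l', hl', hprod, hlen, hcl, hlt⟩ :=
    exists_partialProdLengthSum_lt_of_not_isAscending cs hl hred hasc
  obtain ⟨l'', hasc, hprod', hlen', hcl'⟩ := ih _ hlt hl' (by rw [hprod, hred, hlen]) rfl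
  exact ⟨l'', hasc, hprod'.trans hprod, hlen'.trans hlen, hcl'.trans hcl⟩

/-- Peel off the first factor by the strong exchange property: it is conjugate to the deleted
letter by a product of remaining letters. -/
theorem closure_eq_closure_simple_of_isAscending {l : List W} {ω : List B}
    (hasc : IsAscending cs l) (hprod : l.prod = cs.wordProd ω) (hlen : l.length = ω.length) :
    Subgroup.closure {t | t ∈ l} = Subgroup.closure {t | t ∈ ω.map cs.simple} := by
  induction l generalizing ω with
  | nil => rw [List.eq_nil_of_length_eq_zero hlen.symm, List.map_nil]
  | cons t l ih =>
    obtain ⟨hinv, hasc⟩ := hasc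
    have ht := hinv.1
    rw [hprod] at hinv
    obtain ⟨j, hj, htj⟩ := List.mem_iff_getElem.1 (mem_leftInvSeq_of_isLeftInversion cs hinv)
    rw [cs.length_leftInvSeq] at hj
    have hprod' : l.prod = cs.wordProd (ω.eraseIdx j) := by
      rw [← cs.getD_leftInvSeq_mul_wordProd, List.getD_eq_getElem _ _ (by simpa using hj), htj,
        ← hprod, List.prod_cons, ← mul_assoc, ht.mul_self, one_mul]
    have hprefix : cs.wordProd (ω.take j) ∈
        Subgroup.closure {t | t ∈ (ω.eraseIdx j).map cs.simple} := by
      refine list_prod_mem fun s hs ↦ Subgroup.subset_closure ?_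
      simp only [List.eraseIdx_eq_take_drop_succ, List.map_append, List.mem_append]
      exact Or.inl hs
    have hletters : {t | t ∈ ω.map cs.simple} =
        {t | t ∈ cs.simple ω[j] :: (ω.eraseIdx j).map cs.simple} := by
      ext s
      exact ((List.getElem_cons_eraseIdx_perm hj).map cs.simple).mem_iff.symm
    have htconj : t = cs.wordProd (ω.take j) * cs.simple ω[j] * (cs.wordProd (ω.take j))⁻¹ := by
      rw [← htj, cs.getElem_leftInvSeq ω j hj]
    have hlen' : l.length = (ω.eraseIdx j).length := by
      rw [List.length_eraseIdx_of_lt hj, ← hlen, List.length_cons, Nat.add_sub_cancel]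
    rw [closure_setOf_mem_cons, ih hasc hprod' hlen',
      hletters, closure_setOf_mem_cons, htconj, closure_conj_singleton_sup hprefix]

theorem closure_eq_closure_simple {l : List W} {ω : List B} (hl : ∀ t ∈ l, cs.IsReflection t)
    (hprod : l.prod = cs.wordProd ω) (hlen : l.length = ω.length)
    (hred : reflLength cs (cs.wordProd ω) = ω.length) :
    Subgroup.closure {t | t ∈ l} = Subgroup.closure {t | t ∈ ω.map cs.simple} := by
  obtain ⟨l', hasc, hprod', hlen', hcl⟩ :=
    exists_isAscending_factorization cs hl (by rw [hprod, hred, hlen])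
  rw [← hcl]
  exact closure_eq_closure_simple_of_isAscending cs hasc (hprod'.trans hprod) (hlen'.trans hlen)

theorem closure_of_reduced_factorization_independent_general {c : W} (ω : List B)
    (hc : c = cs.wordProd ω) (hlc : reflLength cs c = ω.length) (l l' : List W)
    (hlen : l.length = ω.length) (hlen' : l'.length = ω.length)
    (hmem : ∀ t ∈ l, cs.IsReflection t) (hmem' : ∀ t ∈ l', cs.IsReflection t)
    (hprod : l.prod = c) (hprod' : l'.prod = c) :
    Subgroup.closure {t | t ∈ l} = Subgroup.closure {t | t ∈ l'} := by
  subst hc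
  rw [closure_eq_closure_simple cs hmem hprod hlen hlc,
    closure_eq_closure_simple cs hmem' hprod' hlen' hlc]

end Factorizations

/-- Let `(W,T)` be a dual Coxeter system of finite rank `m` (witnessed
by a Coxeter system `cs` indexed by `Fin m` with reflection set `T`) and let
`c = s₁ ⋯ sₙ` be a parabolic Coxeter element with `ℓ_T(c) = n`.  Then the subgroup
generated by the factors of a reduced reflection factorization of `c` does not depend on
the factorization: for any two length-`n` tuples of reflections with product `c`, the
subgroups generated by their entries coincide. -/
theorem closure_of_reduced_factorization_independent
    {W : Type*} [Group W] (T : Set W) (m n : ℕ) (hmn : n ≤ m)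
    (M : CoxeterMatrix (Fin m)) (cs : CoxeterSystem M W)
    (hT : {t | cs.IsReflection t} = T)
    (c : W) (hc : c = (List.ofFn fun i : Fin n => cs.simple (Fin.castLE hmn i)).prod)
    (hlc : reflLength cs c = n)
    (l l' : List W) (hlen : l.length = n) (hlen' : l'.length = n)
    (hmem : ∀ t ∈ l, t ∈ T) (hmem' : ∀ t ∈ l', t ∈ T)
    (hprod : l.prod = c) (hprod' : l'.prod = c) :
    Subgroup.closure {t | t ∈ l} = Subgroup.closure {t | t ∈ l'} := by
  subst hT
  refine closure_of_reduced_factorization_independent_general cs (List.ofFn (Fin.castLE hmn)) ?_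
    ?_ l l' ?_ ?_ hmem hmem' hprod hprod'
  · rw [hc, CoxeterSystem.wordProd, List.map_ofFn, Function.comp_def]
  all_goals simpa
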